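/- arXiv:2010.04662 — 2 statements merged into one kernel-verified Lean document; each statement's English description precedes it below -/
import Mathlib

section
/- Let K be a field, s ∈ ℤ^m, let P ∈ K[x]^{m×m} be in −s-weak Popov form, let δ ∈ ℕ^m be the −s-pivot degree of P, and assume s ≥ δ entrywise. Let R ∈ K[x]^{m×m} be a −δ-weak Popov form of P and let U ∈ K[x]^{m×m} be the unimodular matrix with U·P = R. Set d = (s − δ, δ) ∈ ℤ^{2m} (concatenation) and F = [P; −I_m] ∈ K[x]^{2m×m} (P stacked above minus the identity). Then: (i) the −d-pivot profile of the m×2m matrix [U R] is (m + j, δ_j) for j = 1,…,m; (ii) [U R] is in −d-weak Popov form with rdeg_{−d}([U R]) = 0 and cdeg([U R]) ≤ d entrywise; (iii) [U R] is a basis of the left kernel of F. -/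
open Polynomial Matrix

/-- The degree of a polynomial, viewed in `ℤ ∪ {-∞}`. -/
noncomputable def degZ {K : Type*} [Field K] (p : K[X]) : WithBot ℤ :=
  p.degree.map fun a : ℕ => (a : ℤ)

/-- The `s`-row degree of a (row) vector of polynomials. -/
noncomputable def rdegRow {K : Type*} [Field K] {ν : Type*} [Fintype ν]
    (s : ν → ℤ) (v : ν → K[X]) : WithBot ℤ :=
  Finset.univ.sup fun j => degZ (v j) + (s j : WithBot ℤ)

/-- The `s`-row degree of a polynomial matrix. -/
noncomputable def rdeg {K : Type*} [Field K] {ι ν : Type*} [Fintype ν]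
    (s : ν → ℤ) (P : Matrix ι ν K[X]) : ι → WithBot ℤ :=
  fun i => rdegRow s (P i)

/-- The `t`-column degree of a polynomial matrix. -/
noncomputable def cdeg {K : Type*} [Field K] {ι ν : Type*} [Fintype ι]
    (t : ι → ℤ) (P : Matrix ι ν K[X]) : ν → WithBot ℤ :=
  fun j => Finset.univ.sup fun i => degZ (P i j) + (t i : WithBot ℤ)

/-- Coefficient of integer degree `d` of a polynomial (0 if `d < 0`). -/
noncomputable def coeffZ {K : Type*} [Field K] (p : K[X]) (d : ℤ) : K :=
  if 0 ≤ d then p.coeff d.toNat else 0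

/-- The `s`-leading matrix of a polynomial matrix. -/
noncomputable def lm {K : Type*} [Field K] {ι ν : Type*} [Fintype ν]
    (s : ν → ℤ) (P : Matrix ι ν K[X]) : Matrix ι ν K :=
  Matrix.of fun i j =>
    (rdeg s P i).recBotCoe 0 fun t => coeffZ (P i j) (t - s j)

/-- `P` is in `s`-reduced form: its `s`-leading matrix has full row rank,
i.e. its rows are linearly independent over `K`. -/
def IsReducedForm {K : Type*} [Field K] {ι ν : Type*} [Fintype ν]
    (s : ν → ℤ) (P : Matrix ι ν K[X]) : Prop :=
  LinearIndependent K fun i => lm s P i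

open Classical in
/-- The `s`-pivot index of a row vector: the largest column index where the
`s`-row degree is attained (with a nonzero entry); `⊥` for the zero row. -/
noncomputable def piv {K : Type*} [Field K] {ν : Type*} [Fintype ν] [LinearOrder ν]
    (s : ν → ℤ) (v : ν → K[X]) : WithBot ν :=
  (Finset.univ.filter fun j => v j ≠ 0 ∧ degZ (v j) + (s j : WithBot ℤ) = rdegRow s v).max

/-- The `s`-pivot degree of a row vector (junk value `0` for the zero row). -/
noncomputable def pivDeg {K : Type*} [Field K] {ν : Type*} [Fintype ν] [LinearOrder ν]
    (s : ν → ℤ) (v : ν → K[X]) : ℕ :=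
  ((piv s v).map fun j => (v j).natDegree).unbotD 0

/-- `P` is in `s`-weak Popov form: no zero row and strictly increasing `s`-pivot indices. -/
def IsWeakPopov {K : Type*} [Field K] {ι ν : Type*} [Fintype ν] [LinearOrder ν] [Preorder ι]
    (s : ν → ℤ) (P : Matrix ι ν K[X]) : Prop :=
  (∀ i, piv s (P i) ≠ ⊥) ∧ StrictMono fun i => piv s (P i)

/-- `P` is in `s`-unordered weak Popov form: no zero row and pairwise distinct
`s`-pivot indices. -/
def IsUWeakPopov {K : Type*} [Field K] {ι ν : Type*} [Fintype ν] [LinearOrder ν]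
    (s : ν → ℤ) (P : Matrix ι ν K[X]) : Prop :=
  (∀ i, piv s (P i) ≠ ⊥) ∧ Function.Injective fun i => piv s (P i)

/-- `P` is in `s`-Popov form: `s`-weak Popov, monic pivots, and each pivot entry
has degree strictly larger than the other entries of its column. -/
def IsPopov {K : Type*} [Field K] {ι ν : Type*} [Fintype ν] [LinearOrder ν] [Preorder ι]
    (s : ν → ℤ) (P : Matrix ι ν K[X]) : Prop :=
  IsWeakPopov s P ∧
    ∀ i (j : ν), piv s (P i) = (j : WithBot ν) →
      (P i j).Monic ∧ ∀ i', i' ≠ i → (P i' j).degree < (P i j).degree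

/-- The row space of a polynomial matrix. -/
noncomputable def rowSpace {K : Type*} [Field K] {ι ν : Type*} (P : Matrix ι ν K[X]) :
    Submodule K[X] (ν → K[X]) :=
  Submodule.span K[X] (Set.range fun i => P i)

/-- The rows of `B` form a basis of the module `M`. -/
def IsBasisOf {K : Type*} [Field K] {ι ν : Type*} (B : Matrix ι ν K[X])
    (M : Submodule K[X] (ν → K[X])) : Prop :=
  LinearIndependent K[X] (fun i => B i) ∧
    Submodule.span K[X] (Set.range fun i => B i) = M

/-- The left kernel of a polynomial matrix. -/
noncomputable def leftKernel {K : Type*} [Field K] {ι ν : Type*} [Fintype ι]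
    (F : Matrix ι ν K[X]) : Submodule K[X] (ι → K[X]) :=
  LinearMap.ker F.vecMulLinear

/-!
Write `t i` for the `-s`-row degree of row `i` of `P`, so that `t = δ - s`. Since the pivots of `P`
are on the diagonal, no cancellation can kill the leading term of `u P`: its `-s`-row degree is the
`t`-row degree of `u` (the predictable degree property), and if `u ≠ 0`, then `u P` has an entry of
degree at least `δ k` in some column `k`. Applied to the rows of `R = U P`, the latter says that
their `-δ`-row degrees are nonnegative, that is, `δ i ≤ deg R i i`. But a weak Popov matrix has the
degree of its determinant equal to the sum of its pivot degrees, and `det R` is a unit times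
`det P`, so all these inequalities are equalities and the rows of `R` have `-δ`-row degree zero. As
`-s ≤ -δ`, predictable degree then bounds the `(δ - s)`-row degrees of the rows of `U` by zero, so
that the pivots of `[U R]` are those of `R`. Finally `[U R] = U [1 P]`, and the rows of `[1 P]` are
a basis of the kernel of `[P; -1]`.
-/

section Degree

variable {K : Type*} [Field K]

lemma degZ_of_ne_zero {p : K[X]} (hp : p ≠ 0) : degZ p = ((p.natDegree : ℤ) : WithBot ℤ) := by
  rw [degZ, degree_eq_natDegree hp]
  rfl

@[simp]
lemma degZ_eq_bot {p : K[X]} : degZ p = ⊥ ↔ p = 0 := by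
  rw [degZ, WithBot.map_eq_bot_iff, degree_eq_bot]

lemma degZ_mul (p q : K[X]) : degZ (p * q) = degZ p + degZ q := by
  simp only [degZ, degree_mul]
  exact WithBot.map_add (Nat.castAddMonoidHom ℤ) _ _

lemma degZ_lt_degZ {p q : K[X]} : degZ p < degZ q ↔ p.degree < q.degree :=
  (WithBot.strictMono_map_iff.mpr Int.natCast_strictMono).lt_iff_lt

lemma degZ_add_le (p q : K[X]) : degZ (p + q) ≤ max (degZ p) (degZ q) := by
  have hmono : Monotone (WithBot.map (Nat.cast : ℕ → ℤ)) :=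
    WithBot.monotone_map_iff.mpr Nat.mono_cast
  exact (hmono (degree_add_le p q)).trans_eq hmono.map_max

lemma degZ_add_eq_left {p q : K[X]} (h : degZ q < degZ p) : degZ (p + q) = degZ p := by
  rw [degZ, degree_add_eq_left_of_degree_lt (degZ_lt_degZ.mp h), degZ]

lemma degZ_sum_add_le {ι : Type*} {S : Finset ι} {f : ι → K[X]} {c b : WithBot ℤ}
    (h : ∀ i ∈ S, degZ (f i) + c ≤ b) : degZ (∑ i ∈ S, f i) + c ≤ b := by
  refine Finset.sum_induction f (fun p => degZ p + c ≤ b) (fun p q hp hq => ?_) ?_ h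
  · calc degZ (p + q) + c ≤ max (degZ p) (degZ q) + c := by gcongr; exact degZ_add_le p q
      _ ≤ b := by rw [max_add]; exact max_le hp hq
  · simp [degZ_eq_bot.mpr]

lemma degZ_sum_add_lt {ι : Type*} {S : Finset ι} {f : ι → K[X]} {c b : WithBot ℤ} (hb : ⊥ < b)
    (h : ∀ i ∈ S, degZ (f i) + c < b) : degZ (∑ i ∈ S, f i) + c < b := by
  refine Finset.sum_induction f (fun p => degZ p + c < b) (fun p q hp hq => ?_) ?_ h
  · calc degZ (p + q) + c ≤ max (degZ p) (degZ q) + c := by gcongr; exact degZ_add_le p q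
      _ < b := by rw [max_add]; exact max_lt hp hq
  · simpa [degZ_eq_bot.mpr] using hb

end Degree

section RowDegree

variable {K ν : Type*} [Field K] [Fintype ν] {s t : ν → ℤ} {v : ν → K[X]}

lemma degZ_add_le_rdegRow (s : ν → ℤ) (v : ν → K[X]) (j : ν) :
    degZ (v j) + (s j : WithBot ℤ) ≤ rdegRow s v :=
  Finset.le_sup (f := fun j => degZ (v j) + (s j : WithBot ℤ)) (Finset.mem_univ j)

lemma rdegRow_le_iff {b : WithBot ℤ} :
    rdegRow s v ≤ b ↔ ∀ j, degZ (v j) + (s j : WithBot ℤ) ≤ b := by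
  simp [rdegRow]

lemma rdegRow_eq_bot : rdegRow s v = ⊥ ↔ v = 0 := by
  simp [rdegRow, Finset.sup_eq_bot_iff, WithBot.add_eq_bot, funext_iff]

lemma rdegRow_mono (h : s ≤ t) : rdegRow s v ≤ rdegRow t v :=
  Finset.sup_mono_fun fun j _ => by gcongr; exact WithBot.coe_le_coe.mpr (h j)

lemma rdegRow_append {m n : ℕ} (a : Fin m → ℤ) (b : Fin n → ℤ) (u : Fin m → K[X])
    (v : Fin n → K[X]) :
    rdegRow (Fin.append a b) (Fin.append u v) = max (rdegRow a u) (rdegRow b v) :=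
  eq_of_forall_ge_iff fun c => by
    simp only [max_le_iff, rdegRow_le_iff, Fin.forall_fin_add, Fin.append_left, Fin.append_right]

lemma cdeg_le_of_rdeg_neg_le {ι : Type*} [Fintype ι] {A : Matrix ι ν K[X]} {d : ν → ℤ}
    (h : ∀ i, rdeg (-d) A i ≤ ((0 : ℤ) : WithBot ℤ)) (j : ν) : cdeg (fun _ => 0) A j ≤ d j := by
  refine Finset.sup_le fun i _ => ?_
  by_cases hA : A i j = 0
  · simp [degZ_eq_bot.mpr hA]
  · have hij := (degZ_add_le_rdegRow (-d) (A i) j).trans (h i)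
    rw [degZ_of_ne_zero hA] at hij ⊢
    norm_cast at hij ⊢
    simp only [Pi.neg_apply] at hij
    lia

end RowDegree

section Pivot

variable {K ν : Type*} [Field K] [Fintype ν] [LinearOrder ν] {s : ν → ℤ} {v : ν → K[X]} {j k : ν}

lemma piv_eq_coe_iff : piv s v = j ↔ v j ≠ 0 ∧ degZ (v j) + (s j : WithBot ℤ) = rdegRow s v ∧
    ∀ k, j < k → degZ (v k) + (s k : WithBot ℤ) < rdegRow s v := by
  classical
  constructor
  · intro h
    obtain ⟨hj, hdeg⟩ := (Finset.mem_filter.mp (Finset.mem_of_max h)).2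
    refine ⟨hj, hdeg, fun k hjk => (degZ_add_le_rdegRow s v k).lt_of_ne fun hk => hjk.not_ge ?_⟩
    have hvk : v k ≠ 0 := by
      intro hvk
      rw [hvk, degZ_eq_bot.mpr rfl, WithBot.bot_add, eq_comm, rdegRow_eq_bot] at hk
      exact hj (congrFun hk j)
    exact Finset.le_max_of_eq (Finset.mem_filter.mpr ⟨Finset.mem_univ k, hvk, hk⟩) h
  · rintro ⟨hj, hdeg, hlt⟩
    refine le_antisymm (Finset.max_le fun k hk => WithBot.coe_le_coe.mpr ?_)
      (Finset.le_max (Finset.mem_filter.mpr ⟨Finset.mem_univ j, hj, hdeg⟩))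
    exact not_lt.mp fun hjk => (hlt k hjk).ne (Finset.mem_filter.mp hk).2.2

lemma exists_piv_eq_coe (s : ν → ℤ) (hv : v ≠ 0) : ∃ j : ν, piv s v = j := by
  classical
  have : Nonempty ν := (Function.ne_iff.mp hv).nonempty
  obtain ⟨j, -, hj⟩ := Finset.exists_mem_eq_sup Finset.univ Finset.univ_nonempty
    fun j => degZ (v j) + (s j : WithBot ℤ)
  have hvj : v j ≠ 0 := by
    intro h
    rw [h, degZ_eq_bot.mpr rfl, WithBot.bot_add] at hj
    exact hv (rdegRow_eq_bot.mp hj)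
  exact Finset.max_of_mem (Finset.mem_filter.mpr ⟨Finset.mem_univ j, hvj, hj.symm⟩)

lemma ne_zero_of_piv_ne_bot (h : piv s v ≠ ⊥) : v ≠ 0 := by
  obtain ⟨j, hj⟩ := WithBot.ne_bot_iff_exists.mp h
  exact ne_of_apply_ne (· j) (piv_eq_coe_iff.mp hj.symm).1

lemma degZ_add_lt_rdegRow_of_piv_lt (hv : v ≠ 0) (h : piv s v < k) :
    degZ (v k) + (s k : WithBot ℤ) < rdegRow s v := by
  obtain ⟨j, hj⟩ := exists_piv_eq_coe s hv
  exact (piv_eq_coe_iff.mp hj).2.2 k (WithBot.coe_lt_coe.mp (hj ▸ h))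

lemma pivDeg_eq_natDegree (h : piv s v = j) : pivDeg s v = (v j).natDegree := by
  rw [pivDeg, h]
  rfl

lemma rdegRow_eq_pivDeg_add (h : piv s v = j) :
    rdegRow s v = ((pivDeg s v + s j : ℤ) : WithBot ℤ) := by
  obtain ⟨hj, hdeg, -⟩ := piv_eq_coe_iff.mp h
  rw [← hdeg, degZ_of_ne_zero hj, pivDeg_eq_natDegree h, WithBot.coe_add]

lemma natDegree_add_le_pivDeg_add (h : piv s v = j) (hk : v k ≠ 0) :
    (v k).natDegree + s k ≤ pivDeg s v + s j := by
  have hdeg := degZ_add_le_rdegRow s v k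
  rw [degZ_of_ne_zero hk, rdegRow_eq_pivDeg_add h] at hdeg
  exact_mod_cast hdeg

lemma natDegree_add_lt_pivDeg_add (h : piv s v = j) (hk : v k ≠ 0) (hjk : j < k) :
    (v k).natDegree + s k < pivDeg s v + s j := by
  have hdeg := (piv_eq_coe_iff.mp h).2.2 k hjk
  rw [degZ_of_ne_zero hk, rdegRow_eq_pivDeg_add h] at hdeg
  exact_mod_cast hdeg

lemma piv_append_of_rdegRow_le {m n : ℕ} {a : Fin m → ℤ} {b : Fin n → ℤ} {u : Fin m → K[X]}
    {v : Fin n → K[X]} {j : Fin n} (hle : rdegRow a u ≤ rdegRow b v) (hj : piv b v = j) :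
    piv (Fin.append a b) (Fin.append u v) = Fin.natAdd m j := by
  simp only [piv_eq_coe_iff, rdegRow_append, max_eq_right hle, Fin.append_right] at hj ⊢
  refine ⟨hj.1, hj.2.1, Fin.addCases (fun k hk => ?_) fun k hk => ?_⟩
  · have hlt : Fin.castAdd n k < Fin.natAdd m j :=
      Fin.lt_def.mpr (k.isLt.trans_le (Fin.le_coe_natAdd m j))
    exact absurd hk hlt.not_gt
  · rw [Fin.append_right, Fin.append_right]
    exact hj.2.2 k ((Fin.natAdd_lt_natAdd_iff m).mp hk)

lemma pivDeg_append_of_rdegRow_le {m n : ℕ} {a : Fin m → ℤ} {b : Fin n → ℤ} {u : Fin m → K[X]}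
    {v : Fin n → K[X]} {j : Fin n} (hle : rdegRow a u ≤ rdegRow b v) (hj : piv b v = j) :
    pivDeg (Fin.append a b) (Fin.append u v) = pivDeg b v := by
  rw [pivDeg_eq_natDegree (piv_append_of_rdegRow_le hle hj), Fin.append_right,
    pivDeg_eq_natDegree hj]

lemma isWeakPopov_of_piv_eq {ι : Type*} [Preorder ι] {P : Matrix ι ν K[X]} {π : ι → ν}
    (hπ : StrictMono π) (h : ∀ i, piv s (P i) = π i) : IsWeakPopov s P := by
  refine ⟨fun i => h i ▸ WithBot.coe_ne_bot, fun i j hij => ?_⟩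
  simpa only [h, WithBot.coe_lt_coe] using hπ hij

end Pivot

section PredictableDegree

variable {K ι ν : Type*} [Field K] [Fintype ι] [LinearOrder ι] [Fintype ν] [LinearOrder ν]
  {s : ν → ℤ} {t : ι → ℤ} {P : Matrix ι ν K[X]} {u : ι → K[X]} {i : ι} {j : ν}

lemma rdegRow_vecMul_le {ι ν : Type*} [Fintype ι] [Fintype ν] {s : ν → ℤ} {t : ι → ℤ}
    {P : Matrix ι ν K[X]} (ht : ∀ i, rdegRow s (P i) ≤ t i) (u : ι → K[X]) :
    rdegRow s (u ᵥ* P) ≤ rdegRow t u := by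
  refine rdegRow_le_iff.mpr fun j => degZ_sum_add_le fun i _ => ?_
  calc degZ (u i * P i j) + (s j : WithBot ℤ)
      = degZ (u i) + (degZ (P i j) + (s j : WithBot ℤ)) := by rw [degZ_mul, add_assoc]
    _ ≤ degZ (u i) + t i := by gcongr; exact (degZ_add_le_rdegRow s (P i) j).trans (ht i)
    _ ≤ rdegRow t u := degZ_add_le_rdegRow t u i

/-- The summands `u k * P k j` with `k ≠ i` have smaller degree than the one with `k = i`: for
`k < i` because column `j` lies to the right of the pivot of row `k` of `P`, and for `k > i` because
`k` lies to the right of the pivot of `u`. -/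
lemma degZ_mul_add_lt_rdegRow (hP : IsWeakPopov s P) (ht : ∀ i, rdegRow s (P i) = t i)
    (hi : piv t u = i) (hj : piv s (P i) = j) {k : ι} (hk : k ≠ i) :
    degZ (u k * P k j) + (s j : WithBot ℤ) < rdegRow t u := by
  have hu : u ≠ 0 := ne_zero_of_piv_ne_bot (hi ▸ WithBot.coe_ne_bot)
  rw [degZ_mul, add_assoc]
  rcases hk.lt_or_gt with hki | hik
  · by_cases huk : u k = 0
    · rw [degZ_eq_bot.mpr huk, WithBot.bot_add, bot_lt_iff_ne_bot, Ne, rdegRow_eq_bot]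
      exact hu
    calc degZ (u k) + (degZ (P k j) + (s j : WithBot ℤ))
        < degZ (u k) + t k := by
          refine WithBot.add_lt_add_left (degZ_eq_bot.not.mpr huk) ?_
          rw [← ht]
          exact degZ_add_lt_rdegRow_of_piv_lt (ne_zero_of_piv_ne_bot (hP.1 k)) (hj ▸ hP.2 hki)
      _ ≤ rdegRow t u := degZ_add_le_rdegRow t u k
  · calc degZ (u k) + (degZ (P k j) + (s j : WithBot ℤ))
        ≤ degZ (u k) + t k := by gcongr; exact (degZ_add_le_rdegRow s (P k) j).trans_eq (ht k)
      _ < rdegRow t u := degZ_add_lt_rdegRow_of_piv_lt hu (hi ▸ WithBot.coe_lt_coe.mpr hik)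

lemma degZ_vecMul_add (hP : IsWeakPopov s P) (ht : ∀ i, rdegRow s (P i) = t i)
    (hi : piv t u = i) (hj : piv s (P i) = j) :
    degZ ((u ᵥ* P) j) + (s j : WithBot ℤ) = rdegRow t u := by
  have hlead : degZ (u i * P i j) + (s j : WithBot ℤ) = rdegRow t u := by
    rw [degZ_mul, add_assoc, (piv_eq_coe_iff.mp hj).2.1, ht, (piv_eq_coe_iff.mp hi).2.1]
  have hrest : degZ (∑ k ∈ Finset.univ.erase i, u k * P k j) + (s j : WithBot ℤ) < rdegRow t u := by
    refine degZ_sum_add_lt (bot_lt_iff_ne_bot.mpr fun hbot => ?_) fun k hk =>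
      degZ_mul_add_lt_rdegRow hP ht hi hj (Finset.ne_of_mem_erase hk)
    exact ne_zero_of_piv_ne_bot (hi ▸ WithBot.coe_ne_bot) (rdegRow_eq_bot.mp hbot)
  have hsum : (u ᵥ* P) j = u i * P i j + ∑ k ∈ Finset.univ.erase i, u k * P k j :=
    (Finset.add_sum_erase _ (fun k => u k * P k j) (Finset.mem_univ i)).symm
  rw [hsum, degZ_add_eq_left (lt_of_add_lt_add_right (hlead ▸ hrest)), hlead]

theorem rdegRow_vecMul (hP : IsWeakPopov s P) (ht : ∀ i, rdegRow s (P i) = t i) (u : ι → K[X]) :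
    rdegRow s (u ᵥ* P) = rdegRow t u := by
  refine (rdegRow_vecMul_le (fun i => (ht i).le) u).antisymm ?_
  rcases eq_or_ne u 0 with rfl | hu
  · rw [rdegRow_eq_bot.mpr rfl]
    exact bot_le
  obtain ⟨i, hi⟩ := exists_piv_eq_coe t hu
  obtain ⟨j, hj⟩ := WithBot.ne_bot_iff_exists.mp (hP.1 i)
  rw [← degZ_vecMul_add hP ht hi hj.symm]
  exact degZ_add_le_rdegRow s _ j

lemma exists_pivDeg_le_degZ_vecMul (hP : IsWeakPopov s P) (hu : u ≠ 0) :
    ∃ (i : ι) (j : ν), piv s (P i) = j ∧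
      ((pivDeg s (P i) : ℤ) : WithBot ℤ) ≤ degZ ((u ᵥ* P) j) := by
  choose π hπ using fun i => WithBot.ne_bot_iff_exists.mp (hP.1 i)
  have ht i := rdegRow_eq_pivDeg_add (hπ i).symm
  obtain ⟨i, hi⟩ := exists_piv_eq_coe (fun i => pivDeg s (P i) + s (π i)) hu
  refine ⟨i, π i, (hπ i).symm,
    WithBot.le_of_add_le_add_right (z := s (π i)) WithBot.coe_ne_bot ?_⟩
  obtain ⟨hui, hdeg, -⟩ := piv_eq_coe_iff.mp hi
  rw [degZ_vecMul_add hP ht hi (hπ i).symm, ← hdeg, degZ_of_ne_zero hui]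
  norm_cast
  lia

end PredictableDegree

section Square

variable {K ν : Type*} [Field K] [Fintype ν] [LinearOrder ν] {s : ν → ℤ} {P : Matrix ν ν K[X]}

lemma IsWeakPopov.piv_eq (hP : IsWeakPopov s P) (i : ν) : piv s (P i) = i := by
  choose π hπ using fun i => WithBot.ne_bot_iff_exists.mp (hP.1 i)
  have hmono : StrictMono π := fun i j hij => by
    simpa only [← hπ, WithBot.coe_lt_coe] using hP.2 hij
  rw [← hπ i, hmono.le_id.antisymm hmono.id_le, id]

lemma perm_eq_one_of_forall_le {α : Type*} [PartialOrder α] [WellFoundedLT α] {σ : Equiv.Perm α}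
    (h : ∀ i, i ≤ σ i) : σ = 1 := by
  ext i
  induction i using WellFoundedLT.induction with
  | ind i ih =>
    have hle : σ⁻¹ i ≤ i := by simpa using h (σ⁻¹ i)
    rcases hle.eq_or_lt with heq | hlt
    · simpa using congrArg σ heq.symm
    · exact absurd (by simpa using ih _ hlt) hlt.ne'

/-- Summed over the rows, the shifts cancel; some factor lies to the right of the pivot of its row,
which makes the inequality strict. -/
lemma degree_prod_perm_lt (hP : IsWeakPopov s P) {σ : Equiv.Perm ν} (hσ : σ ≠ 1) :
    (∏ i, P (σ i) i).degree < (∏ i, P i i).degree := by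
  have hdiag : ∀ i, P i i ≠ 0 := fun i => (piv_eq_coe_iff.mp (hP.piv_eq i)).1
  by_cases hprod : ∏ i, P (σ i) i = 0
  · rw [hprod, degree_zero, bot_lt_iff_ne_bot, degree_ne_bot]
    exact Finset.prod_ne_zero_iff.mpr fun i _ => hdiag i
  have hne : ∀ i, P (σ i) i ≠ 0 := fun i => Finset.prod_ne_zero_iff.mp hprod i (Finset.mem_univ i)
  obtain ⟨k, hk⟩ : ∃ k, σ k < k := by
    by_contra! h
    exact hσ (perm_eq_one_of_forall_le h)
  have hsum : ∑ i, ((P (σ i) i).natDegree + s i) <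
      ∑ i, ((P (σ i) (σ i)).natDegree + s (σ i)) := by
    simp only [← pivDeg_eq_natDegree (hP.piv_eq _)]
    exact Finset.sum_lt_sum
      (fun i _ => natDegree_add_le_pivDeg_add (hP.piv_eq (σ i)) (hne i))
      ⟨k, Finset.mem_univ k, natDegree_add_lt_pivDeg_add (hP.piv_eq (σ k)) (hne k) hk⟩
  rw [Equiv.sum_comp σ fun i => ((P i i).natDegree : ℤ) + s i, Finset.sum_add_distrib,
    Finset.sum_add_distrib, add_lt_add_iff_right] at hsum
  rw [degree_prod, degree_prod]
  simp only [degree_eq_natDegree (hne _), degree_eq_natDegree (hdiag _)]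
  exact_mod_cast hsum

theorem natDegree_det_eq_sum_pivDeg (hP : IsWeakPopov s P) :
    P.det.natDegree = ∑ i, pivDeg s (P i) := by
  have hdiag : ∀ i, P i i ≠ 0 := fun i => (piv_eq_coe_iff.mp (hP.piv_eq i)).1
  have hrest : (∑ σ ∈ Finset.univ.erase (1 : Equiv.Perm ν),
      Equiv.Perm.sign σ • ∏ i, P (σ i) i).degree < (∏ i, P i i).degree := by
    refine (degree_sum_le _ _).trans_lt ((Finset.sup_lt_iff ?_).mpr fun σ hσ => ?_)
    · rw [bot_lt_iff_ne_bot, degree_ne_bot]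
      exact Finset.prod_ne_zero_iff.mpr fun i _ => hdiag i
    · exact (degree_smul_le _ _).trans_lt (degree_prod_perm_lt hP (Finset.ne_of_mem_erase hσ))
  rw [det_apply, ← Finset.add_sum_erase _ _ (Finset.mem_univ 1), Equiv.Perm.sign_one, one_smul]
  simp only [pivDeg_eq_natDegree (hP.piv_eq _)]
  exact (natDegree_add_eq_left_of_degree_lt hrest).trans (natDegree_prod _ _ fun i _ => hdiag i)

variable {δ : ν → ℕ} {U : Matrix ν ν K[X]}

lemma le_pivDeg_mul (hP : IsWeakPopov s P) (hδ : ∀ i, pivDeg s (P i) = δ i)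
    (hR : IsWeakPopov (fun i => -(δ i : ℤ)) (U * P)) (i : ν) :
    δ i ≤ pivDeg (fun i => -(δ i : ℤ)) ((U * P) i) := by
  have hU : U i ≠ 0 := by
    intro h
    refine ne_zero_of_piv_ne_bot (hR.1 i) ?_
    rw [mul_apply_eq_vecMul, h, zero_vecMul]
  obtain ⟨k, j, hkj, hdeg⟩ := exists_pivDeg_le_degZ_vecMul hP hU
  obtain rfl : k = j := WithBot.coe_injective ((hP.piv_eq k).symm.trans hkj)
  have hrow : ((0 : ℤ) : WithBot ℤ) ≤ rdegRow (fun i => -(δ i : ℤ)) ((U * P) i) :=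
    calc ((0 : ℤ) : WithBot ℤ) = ((δ k : ℤ) : WithBot ℤ) + ((-(δ k : ℤ) : ℤ) : WithBot ℤ) := by
          rw [← WithBot.coe_add, add_neg_cancel]
      _ ≤ degZ ((U i ᵥ* P) k) + ((-(δ k : ℤ) : ℤ) : WithBot ℤ) := by
          gcongr
          rwa [← hδ k]
      _ ≤ rdegRow (fun i => -(δ i : ℤ)) ((U * P) i) :=
          degZ_add_le_rdegRow (fun i => -(δ i : ℤ)) ((U * P) i) k
  rw [rdegRow_eq_pivDeg_add (hR.piv_eq i), WithBot.coe_le_coe] at hrow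
  lia

theorem pivDeg_mul_eq (hP : IsWeakPopov s P) (hδ : ∀ i, pivDeg s (P i) = δ i)
    (hR : IsWeakPopov (fun i => -(δ i : ℤ)) (U * P)) (hU : IsUnit U.det) (i : ν) :
    pivDeg (fun i => -(δ i : ℤ)) ((U * P) i) = δ i := by
  have hsum : ∑ i, δ i = ∑ i, pivDeg (fun i => -(δ i : ℤ)) ((U * P) i) := by
    rw [← natDegree_det_eq_sum_pivDeg hR, det_mul,
      natDegree_eq_of_degree_eq (degree_eq_degree_of_associated (associated_unit_mul_left _ _ hU)),
      natDegree_det_eq_sum_pivDeg hP]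
    simp only [hδ]
  exact ((Finset.sum_eq_sum_iff_of_le fun i _ => le_pivDeg_mul hP hδ hR i).mp hsum i
    (Finset.mem_univ i)).symm

lemma rdegRow_mul_eq_zero (hP : IsWeakPopov s P) (hδ : ∀ i, pivDeg s (P i) = δ i)
    (hR : IsWeakPopov (fun i => -(δ i : ℤ)) (U * P)) (hU : IsUnit U.det) (i : ν) :
    rdegRow (fun i => -(δ i : ℤ)) ((U * P) i) = ((0 : ℤ) : WithBot ℤ) := by
  rw [rdegRow_eq_pivDeg_add (hR.piv_eq i), pivDeg_mul_eq hP hδ hR hU, add_neg_cancel]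

lemma rdegRow_left_le_zero (hP : IsWeakPopov s P) (hδ : ∀ i, pivDeg s (P i) = δ i)
    (hsδ : ∀ i, s i ≤ -(δ i : ℤ)) (hR : IsWeakPopov (fun i => -(δ i : ℤ)) (U * P))
    (hU : IsUnit U.det) (i : ν) :
    rdegRow (fun j => δ j + s j) (U i) ≤ ((0 : ℤ) : WithBot ℤ) := by
  have ht k : rdegRow s (P k) = ((δ k + s k : ℤ) : WithBot ℤ) := by
    rw [rdegRow_eq_pivDeg_add (hP.piv_eq k), hδ]
  calc rdegRow (fun j => δ j + s j) (U i) = rdegRow s (U i ᵥ* P) := (rdegRow_vecMul hP ht _).symm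
    _ ≤ rdegRow (fun j => -(δ j : ℤ)) ((U * P) i) := rdegRow_mono hsδ
    _ = ((0 : ℤ) : WithBot ℤ) := rdegRow_mul_eq_zero hP hδ hR hU i

end Square

section Basis

variable {K ι ν : Type*} [Field K] {B : Matrix ι ν K[X]} {M : Submodule K[X] (ν → K[X])}

lemma isBasisOf_iff_vecMul [Fintype ι] :
    IsBasisOf B M ↔ Function.Injective B.vecMul ∧ LinearMap.range B.vecMulLinear = M := by
  rw [vecMul_injective_iff, range_vecMulLinear]
  rfl

lemma IsBasisOf.mul_left [Fintype ι] [DecidableEq ι] {U : Matrix ι ι K[X]} (hB : IsBasisOf B M)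
    (hU : IsUnit U.det) : IsBasisOf (U * B) M := by
  have hUunit : IsUnit U := U.isUnit_iff_isUnit_det.mpr hU
  rw [isBasisOf_iff_vecMul] at hB ⊢
  have hcomp : (U * B).vecMulLinear = B.vecMulLinear ∘ₗ U.vecMulLinear :=
    LinearMap.ext fun u => (vecMul_vecMul u U B).symm
  refine ⟨?_, ?_⟩
  · rw [← coe_vecMulLinear, hcomp]
    exact hB.1.comp (vecMul_injective_of_isUnit hUunit)
  · rw [hcomp, LinearMap.range_comp_of_range_eq_top _
      (LinearMap.range_eq_top.mpr (vecMul_surjective_iff_isUnit.mpr hUunit)), hB.2]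

lemma IsBasisOf.submatrix_leftKernel {κ μ : Type*} [Finite ι] [Fintype κ] [Fintype ν]
    {F : Matrix ν μ K[X]} (hB : IsBasisOf B (leftKernel F)) (e : κ ≃ ν) :
    IsBasisOf (B.submatrix id e) (leftKernel (F.submatrix e id)) := by
  cases nonempty_fintype ι
  rw [isBasisOf_iff_vecMul] at hB ⊢
  have hcomp (u : ι → K[X]) : u ᵥ* B.submatrix id e = (u ᵥ* B) ∘ e := rfl
  refine ⟨fun u v huv => hB.1 (e.surjective.injective_comp_right huv), ?_⟩
  ext p
  rw [leftKernel, LinearMap.mem_ker, vecMulLinear_apply, submatrix_vecMul_equiv, Function.comp_id,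
    ← vecMulLinear_apply, ← LinearMap.mem_ker, ← leftKernel, ← hB.2]
  simp only [LinearMap.mem_range, vecMulLinear_apply, hcomp, e.eq_comp_symm]

lemma isBasisOf_fromCols_one_leftKernel [Fintype ι] [DecidableEq ι] [Fintype ν] [DecidableEq ν]
    (P : Matrix ι ν K[X]) :
    IsBasisOf (fromCols 1 P) (leftKernel (fromRows P (-1))) := by
  have hvec (u : ι → K[X]) : u ᵥ* fromCols 1 P = Sum.elim u (u ᵥ* P) := by
    rw [vecMul_fromCols, vecMul_one]
  refine isBasisOf_iff_vecMul.mpr ⟨fun u v huv => ?_, ?_⟩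
  · simp only [hvec] at huv
    exact funext fun i => congrFun huv (Sum.inl i)
  · ext p
    simp only [LinearMap.mem_range, vecMulLinear_apply, hvec, leftKernel, LinearMap.mem_ker,
      vecMul_fromRows, vecMul_neg, vecMul_one, ← sub_eq_add_neg, sub_eq_zero]
    constructor
    · rintro ⟨u, rfl⟩
      rfl
    · intro hp
      exact ⟨p ∘ Sum.inl, by rw [hp, Sum.elim_comp_inl_inr]⟩

lemma isBasisOf_append_leftKernel {m n : ℕ} (P : Matrix (Fin m) (Fin n) K[X])
    {U : Matrix (Fin m) (Fin m) K[X]} (hU : IsUnit U.det) :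
    IsBasisOf (of fun i => Fin.append (U i) ((U * P) i))
      (leftKernel ((fromRows P (-1)).submatrix finSumFinEquiv.symm id)) := by
  have hcols : (of fun i => Fin.append (U i) ((U * P) i)) =
      (U * fromCols 1 P).submatrix id finSumFinEquiv.symm := by
    rw [mul_fromCols, mul_one]
    ext1 i j
    refine Fin.addCases (fun j => ?_) (fun j => ?_) j <;> simp
  rw [hcols]
  exact ((isBasisOf_fromCols_one_leftKernel P).mul_left hU).submatrix_leftKernel _

end Basis

/-- Lemma 5.1: for `P` in `(−s)`-weak Popov form with
`(−s)`-pivot degree `δ ≤ s`, a `(−δ)`-weak Popov form `R` of `P` and the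
unimodular `U` with `U·P = R`: with `d = (s−δ, δ)` and `F = [P; −I]`, the
matrix `[U R]` has `(−d)`-pivot profile `(m+j, δ_j)`, is in `(−d)`-weak Popov
form with `rdeg_{−d}([U R]) = 0` and `cdeg([U R]) ≤ d`, and is a basis of the
left kernel of `F`. -/
theorem normalize_kernel_basis {K : Type*} [Field K] {m : ℕ}
    (s : Fin m → ℤ) (P : Matrix (Fin m) (Fin m) K[X])
    (hP : IsWeakPopov (fun i => -s i) P)
    (δ : Fin m → ℕ) (hδ : ∀ i, pivDeg (fun j => -s j) (P i) = δ i)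
    (hsδ : ∀ i, (δ i : ℤ) ≤ s i)
    (R U : Matrix (Fin m) (Fin m) K[X])
    (hRbasis : IsBasisOf R (rowSpace P))
    (hRwp : IsWeakPopov (fun i => -(δ i : ℤ)) R)
    (hU : IsUnit U.det) (hUP : U * P = R) :
    let d : Fin (m + m) → ℤ := Fin.append (fun i => s i - δ i) (fun i => (δ i : ℤ))
    let F : Matrix (Fin (m + m)) (Fin m) K[X] :=
      (Matrix.fromRows P (-1)).submatrix (⇑(finSumFinEquiv (m := m) (n := m)).symm) id
    let UR : Matrix (Fin m) (Fin (m + m)) K[X] := Matrix.of fun i => Fin.append (U i) (R i)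
    (∀ j : Fin m,
        piv (fun c => -d c) (UR j) = ((Fin.natAdd m j : Fin (m + m)) : WithBot (Fin (m + m))) ∧
        pivDeg (fun c => -d c) (UR j) = δ j) ∧
    IsWeakPopov (fun c => -d c) UR ∧
    (∀ i, rdeg (fun c => -d c) UR i = ((0 : ℤ) : WithBot ℤ)) ∧
    (∀ j : Fin (m + m), cdeg (fun _ => (0 : ℤ)) UR j ≤ ((d j : ℤ) : WithBot ℤ)) ∧
    IsBasisOf UR (leftKernel F) := by
  subst hUP
  intro d F UR
  have hd : (fun c => -d c) = Fin.append (fun j => δ j + -s j) fun j => -(δ j : ℤ) :=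
    funext <| Fin.addCases (fun j => by simp only [d, Fin.append_left]; ring)
      (fun j => by simp only [d, Fin.append_right])
  have hR := rdegRow_mul_eq_zero hP hδ hRwp hU
  have hle i : rdegRow (fun j => δ j + -s j) (U i) ≤ rdegRow (fun j => -(δ j : ℤ)) ((U * P) i) :=
    (rdegRow_left_le_zero hP hδ (fun i => neg_le_neg (hsδ i)) hRwp hU i).trans_eq (hR i).symm
  have hpiv i : piv (fun c => -d c) (UR i) = Fin.natAdd m i := by
    rw [hd]
    exact piv_append_of_rdegRow_le (hle i) (hRwp.piv_eq i)
  have hpivDeg i : pivDeg (fun c => -d c) (UR i) = δ i := by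
    rw [hd, ← pivDeg_mul_eq hP hδ hRwp hU i]
    exact pivDeg_append_of_rdegRow_le (hle i) (hRwp.piv_eq i)
  have hrdeg i : rdeg (fun c => -d c) UR i = ((0 : ℤ) : WithBot ℤ) := by
    rw [rdeg, hd]
    exact (rdegRow_append _ _ _ _).trans ((max_eq_right (hle i)).trans (hR i))
  exact ⟨fun j => ⟨hpiv j, hpivDeg j⟩, isWeakPopov_of_piv_eq (Fin.strictMono_natAdd m) hpiv, hrdeg,
    cdeg_le_of_rdeg_neg_le fun i => (hrdeg i).le, isBasisOf_append_leftKernel P hU⟩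
end

section
/- Let K be a field, fix s = (s_1,…,s_m) ∈ ℕ^m and δ ∈ ℤ_{>0}, with the associated α_j, β_j, m̄, expansion-compression matrix E and expanded shift s̄ as in the column partial linearization. Let K ∈ K[x]^{k×m} satisfy rdeg_{−s}(K) ≥ 0 entrywise, and let K̄ ∈ K[x]^{k×m̄} be the column partial linearization of K. Then rdeg_{−s̄}(K̄) = rdeg_{−s}(K); moreover, if K is in −s-weak Popov form, then K̄ is in −s̄-weak Popov form. -/
open Polynomial Matrix

/-! ### Column partial linearization (Definition 5.3) -/

/-- Number of parts `α_j = ⌈s_j/δ⌉` (with `α_j = 1` when `s_j = 0`). -/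
def cplα (δ : ℕ) {m : ℕ} (s : Fin m → ℕ) (j : Fin m) : ℕ :=
  max 1 ((s j + δ - 1) / δ)

/-- Remainder `β_j` so that `s_j = (α_j − 1)δ + β_j`. -/
def cplβ (δ : ℕ) {m : ℕ} (s : Fin m → ℕ) (j : Fin m) : ℕ :=
  s j - (cplα δ s j - 1) * δ

/-- Index set of the expanded columns: pairs `(j, i)` with `0 ≤ i < α_j`,
ordered lexicographically (this corresponds to `α_1 + ⋯ + α_{j-1} + i`). -/
abbrev CplIdx (δ : ℕ) {m : ℕ} (s : Fin m → ℕ) := Lex ((j : Fin m) × Fin (cplα δ s j))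

/-- The expansion-compression matrix `E`: block diagonal with `j`-th block the
column `(1, x^δ, …, x^{(α_j−1)δ})ᵀ`. -/
noncomputable def cplE (K : Type*) [Field K] (δ : ℕ) {m : ℕ} (s : Fin m → ℕ) :
    Matrix (CplIdx δ s) (Fin m) K[X] :=
  Matrix.of fun c j =>
    if (ofLex c).1 = j then (Polynomial.X : K[X]) ^ (((ofLex c).2 : ℕ) * δ) else 0

/-- The expanded shift `s̄`: within block `j`, `δ` everywhere except `β_j` at
the last position. -/
def cplShift (δ : ℕ) {m : ℕ} (s : Fin m → ℕ) (c : CplIdx δ s) : ℕ :=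
  if ((ofLex c).2 : ℕ) = cplα δ s (ofLex c).1 - 1 then cplβ δ s (ofLex c).1 else δ

/-- The block diagonal matrix `Z = diag(Z_1,…,Z_m)` with
`Z_j ∈ K[x]^{(α_j−1)×α_j}` having `x^δ` on the diagonal and `−1` on the
superdiagonal. -/
noncomputable def cplZ (K : Type*) [Field K] (δ : ℕ) {m : ℕ} (s : Fin m → ℕ) :
    Matrix (Lex ((j : Fin m) × Fin (cplα δ s j - 1))) (CplIdx δ s) K[X] :=
  Matrix.of fun r c =>
    if (ofLex r).1 = (ofLex c).1 then
      (if ((ofLex c).2 : ℕ) = ((ofLex r).2 : ℕ) then (Polynomial.X : K[X]) ^ δ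
       else if ((ofLex c).2 : ℕ) = ((ofLex r).2 : ℕ) + 1 then -1 else 0)
    else 0

/-!
Splitting a column of `K` at `x^δ` writes an entry as `low + x^((α_j - 1)δ) * top` with
`deg low < (α_j - 1)δ ≤ s_j`. Hence the entries of `K̄` of nonnegative `-s̄`-degree all sit in the
last column of their block, and they have the same shifted degrees as the entries of `K` of
nonnegative `-s`-degree, in the same places. A nonnegative row degree and the corresponding pivot
only depend on these entries, and passing from a column to the last one of its block is increasing.
-/

section ShiftedDegree

variable {K ν μ : Type*} [Field K]

/-- The `s`-degree of the `j`-th entry of a row vector; `rdegRow s v` is the largest of these. -/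
noncomputable def entryDeg (s : ν → ℤ) (v : ν → K[X]) (j : ν) : WithBot ℤ :=
  degZ (v j) + (s j : WithBot ℤ)

theorem degZ_add_neg_eq_natCast_iff {p : K[X]} {t n : ℕ} :
    degZ p + ((-(t : ℤ) : ℤ) : WithBot ℤ) = ((n : ℤ) : WithBot ℤ) ↔
      p.degree = ((n + t : ℕ) : WithBot ℕ) := by
  unfold degZ
  cases p.degree with
  | bot => simp only [WithBot.map_bot, WithBot.bot_add, WithBot.bot_ne_coe, WithBot.bot_ne_natCast]
  | coe d =>
    rw [WithBot.map_coe, ← WithBot.coe_add, WithBot.coe_inj, ← WithBot.coe_natCast, WithBot.coe_inj,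
      Nat.cast_id]
    omega

theorem ne_zero_of_entryDeg_ne_bot {s : ν → ℤ} {v : ν → K[X]} {j : ν}
    (h : entryDeg s v j ≠ ⊥) : v j ≠ 0 := by
  intro hv
  simp [entryDeg, degZ, hv] at h

theorem exists_eq_natCast_of_nonneg {a : WithBot ℤ} (ha : ((0 : ℤ) : WithBot ℤ) ≤ a) :
    ∃ n : ℕ, a = ((n : ℤ) : WithBot ℤ) := by
  obtain ⟨z, rfl, hz⟩ := WithBot.coe_le_iff.mp ha
  exact ⟨z.toNat, by rw [Int.toNat_of_nonneg hz]⟩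

section RowDegree

variable [Fintype ν] [Fintype μ] {s : ν → ℤ} {v : ν → K[X]} {t : μ → ℤ} {w : μ → K[X]}

theorem entryDeg_le_rdegRow (s : ν → ℤ) (v : ν → K[X]) (j : ν) :
    entryDeg s v j ≤ rdegRow s v :=
  Finset.le_sup (f := entryDeg s v) (Finset.mem_univ j)

theorem exists_entryDeg_eq_rdegRow (h : rdegRow s v ≠ ⊥) : ∃ j, entryDeg s v j = rdegRow s v := by
  have : Nonempty ν := by
    by_contra hν
    rw [not_nonempty_iff] at hν
    exact h (by rw [rdegRow, Finset.univ_eq_empty, Finset.sup_empty])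
  obtain ⟨j, -, hj⟩ := Finset.exists_mem_eq_sup Finset.univ Finset.univ_nonempty (entryDeg s v)
  exact ⟨j, hj.symm⟩

theorem rdegRow_le_rdegRow (hv : ((0 : ℤ) : WithBot ℤ) ≤ rdegRow s v)
    (h : ∀ (n : ℕ) (j : ν), entryDeg s v j = ((n : ℤ) : WithBot ℤ) →
      ∃ c, entryDeg t w c = ((n : ℤ) : WithBot ℤ)) :
    rdegRow s v ≤ rdegRow t w := by
  obtain ⟨n, hn⟩ := exists_eq_natCast_of_nonneg hv
  obtain ⟨j, hj⟩ := exists_entryDeg_eq_rdegRow (hn ▸ WithBot.coe_ne_bot)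
  obtain ⟨c, hc⟩ := h n j (hj.trans hn)
  exact hn.trans_le (hc ▸ entryDeg_le_rdegRow t w c)

theorem rdegRow_eq_of_entryDeg_iff {e : ν → μ} (hv : ((0 : ℤ) : WithBot ℤ) ≤ rdegRow s v)
    (h : ∀ (n : ℕ) (c : μ), entryDeg t w c = ((n : ℤ) : WithBot ℤ) ↔
      ∃ j, entryDeg s v j = ((n : ℤ) : WithBot ℤ) ∧ e j = c) :
    rdegRow t w = rdegRow s v := by
  have hle : rdegRow s v ≤ rdegRow t w :=
    rdegRow_le_rdegRow hv fun n j hj => ⟨e j, (h n (e j)).mpr ⟨j, hj, rfl⟩⟩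
  refine le_antisymm (rdegRow_le_rdegRow (hv.trans hle) fun n c hc => ?_) hle
  obtain ⟨j, hj, -⟩ := (h n c).mp hc
  exact ⟨j, hj⟩

end RowDegree

section Pivot

variable [LinearOrder ν] [LinearOrder μ]

theorem max_image_of_monotone {e : ν → μ} (he : Monotone e) (F : Finset ν) :
    (F.image e).max = F.max.map e := by
  rw [Finset.max_eq_sup_withBot, Finset.max_eq_sup_withBot, Finset.sup_image,
    Finset.apply_sup_eq_sup_comp_of_linearOrder _ he.withBot_map (WithBot.map_bot e)]
  rfl

variable [Fintype ν] [Fintype μ] {s : ν → ℤ} {t : μ → ℤ}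

open Classical in
theorem piv_eq_max_of_rdegRow_ne_bot {v : ν → K[X]} (h : rdegRow s v ≠ ⊥) :
    piv s v = (Finset.univ.filter fun j => entryDeg s v j = rdegRow s v).max := by
  unfold piv
  congr 1
  ext j
  simp only [Finset.mem_filter_univ]
  exact and_iff_right_of_imp fun hj => ne_zero_of_entryDeg_ne_bot (hj ▸ h)

theorem piv_eq_map_of_entryDeg_iff {v : ν → K[X]} {w : μ → K[X]} {e : ν → μ} (he : Monotone e)
    (hv : ((0 : ℤ) : WithBot ℤ) ≤ rdegRow s v)
    (h : ∀ (n : ℕ) (c : μ), entryDeg t w c = ((n : ℤ) : WithBot ℤ) ↔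
      ∃ j, entryDeg s v j = ((n : ℤ) : WithBot ℤ) ∧ e j = c) :
    piv t w = (piv s v).map e := by
  classical
  have hw := rdegRow_eq_of_entryDeg_iff hv h
  obtain ⟨n, hn⟩ := exists_eq_natCast_of_nonneg hv
  have hbot : rdegRow s v ≠ ⊥ := hn ▸ WithBot.coe_ne_bot
  rw [piv_eq_max_of_rdegRow_ne_bot hbot, piv_eq_max_of_rdegRow_ne_bot (hw ▸ hbot),
    ← max_image_of_monotone he, hw, hn]
  congr 1
  ext c
  simp only [Finset.mem_filter_univ, Finset.mem_image]
  exact h n c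

theorem isWeakPopov_iff_of_piv_eq_map {ι : Type*} [Preorder ι] {P : Matrix ι ν K[X]}
    {Q : Matrix ι μ K[X]} {e : ν → μ} (he : StrictMono e)
    (h : ∀ i, piv t (Q i) = (piv s (P i)).map e) :
    IsWeakPopov t Q ↔ IsWeakPopov s P := by
  simp only [IsWeakPopov, StrictMono, h, ne_eq, WithBot.map_eq_bot_iff, he.withBot_map.lt_iff_lt]

end Pivot

end ShiftedDegree

section PolynomialDegree

variable {R : Type*} [Semiring R]

theorem degree_mul_X_pow_mul_lt {p : R[X]} {δ i n : ℕ} (hp : p.degree < (δ : WithBot ℕ))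
    (hi : i < n) : (p * X ^ (i * δ)).degree < ((n * δ : ℕ) : WithBot ℕ) := by
  rcases eq_or_ne p 0 with rfl | hp0
  · rw [zero_mul, degree_zero]
    exact WithBot.bot_lt_coe _
  · have := Nontrivial.of_polynomial_ne hp0
    rw [degree_mul_X_pow, degree_eq_natDegree hp0, ← Nat.cast_add, Nat.cast_lt]
    rw [degree_eq_natDegree hp0, Nat.cast_lt] at hp
    calc p.natDegree + i * δ < δ + i * δ := by gcongr
      _ = (i + 1) * δ := by ring
      _ ≤ n * δ := by gcongr; exact hi

theorem degree_add_mul_X_pow_eq_iff {low top : R[X]} {N d : ℕ}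
    (hlow : low.degree < (N : WithBot ℕ)) :
    (low + top * X ^ N).degree = ((d + N : ℕ) : WithBot ℕ) ↔ top.degree = (d : WithBot ℕ) := by
  rcases eq_or_ne top 0 with rfl | htop
  · rw [zero_mul, add_zero, degree_zero]
    refine iff_of_false (hlow.trans_le ?_).ne (WithBot.bot_ne_natCast d)
    exact Nat.cast_le.mpr (Nat.le_add_left N d)
  · have := Nontrivial.of_polynomial_ne htop
    have hlt : low.degree < (top * X ^ N).degree := by
      rw [degree_mul_X_pow, degree_eq_natDegree htop, ← Nat.cast_add]
      exact hlow.trans_le (Nat.cast_le.mpr (Nat.le_add_left _ _))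
    rw [degree_add_eq_right_of_degree_lt hlt, degree_mul_X_pow, degree_eq_natDegree htop,
      ← Nat.cast_add, Nat.cast_inj, Nat.cast_inj, Nat.add_right_cancel_iff]

end PolynomialDegree

section PartialLinearization

variable {δ m : ℕ} {s : Fin m → ℕ}

theorem cplα_sub_one (hδ : 0 < δ) (s : Fin m → ℕ) (j : Fin m) :
    cplα δ s j - 1 = (s j - 1) / δ := by
  unfold cplα
  rcases Nat.eq_zero_or_pos (s j) with h | h
  · rw [h, zero_add, Nat.div_eq_of_lt (Nat.sub_lt hδ one_pos), Nat.zero_sub, Nat.zero_div]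
    rfl
  · rw [Nat.sub_add_comm h, Nat.add_div_right _ hδ, max_eq_right (Nat.le_add_left _ _),
      Nat.add_sub_cancel]

theorem cplβ_add_mul (hδ : 0 < δ) (s : Fin m → ℕ) (j : Fin m) :
    cplβ δ s j + (cplα δ s j - 1) * δ = s j := by
  refine Nat.sub_add_cancel ?_
  rw [cplα_sub_one hδ]
  exact (Nat.div_mul_le_self _ _).trans (Nat.sub_le _ _)

/-- The index of the last column of block `j`, that is `α_1 + ⋯ + α_j` in the numbering of the
columns of `K̄` from `1` to `m̄`. -/
def cplLast (δ : ℕ) (s : Fin m → ℕ) (j : Fin m) : CplIdx δ s :=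
  toLex ⟨j, cplα δ s j - 1, Nat.sub_lt (lt_max_of_lt_left one_pos) one_pos⟩

theorem cplLast_strictMono (δ : ℕ) (s : Fin m → ℕ) : StrictMono (cplLast δ s) :=
  fun _ _ h => Sigma.Lex.left _ _ h

theorem mem_range_cplLast_iff {c : CplIdx δ s} :
    c ∈ Set.range (cplLast δ s) ↔ ((ofLex c).2 : ℕ) = cplα δ s (ofLex c).1 - 1 := by
  constructor
  · rintro ⟨j, rfl⟩
    rfl
  · exact fun h => ⟨(ofLex c).1, ofLex.injective (Sigma.ext rfl (heq_of_eq (Fin.ext h.symm)))⟩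

theorem cplShift_cplLast (δ : ℕ) (s : Fin m → ℕ) (j : Fin m) :
    cplShift δ s (cplLast δ s j) = cplβ δ s j :=
  if_pos rfl

theorem cplShift_of_notMem_range_cplLast {c : CplIdx δ s} (hc : c ∉ Set.range (cplLast δ s)) :
    cplShift δ s c = δ :=
  if_neg (mem_range_cplLast_iff.not.mp hc)

variable {K : Type*} [Field K] {w : CplIdx δ s → K[X]}

theorem degree_mul_cplE_lt {p : K[X]} {c : CplIdx δ s} (hc : c ∉ Set.range (cplLast δ s))
    (hp : p.degree < (δ : WithBot ℕ)) (j : Fin m) :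
    (p * cplE K δ s c j).degree < (((cplα δ s j - 1) * δ : ℕ) : WithBot ℕ) := by
  rw [cplE, Matrix.of_apply]
  split_ifs with hj
  · refine degree_mul_X_pow_mul_lt hp ?_
    rw [← hj]
    exact lt_of_le_of_ne (Nat.le_sub_one_of_lt (ofLex c).2.isLt) (mem_range_cplLast_iff.not.mp hc)
  · rw [mul_zero, degree_zero]
    exact WithBot.bot_lt_coe _

theorem exists_vecMul_cplE_eq_add
    (hw : ∀ c ∉ Set.range (cplLast δ s), (w c).degree < (δ : WithBot ℕ)) (j : Fin m) :
    ∃ low : K[X], low.degree < (((cplα δ s j - 1) * δ : ℕ) : WithBot ℕ) ∧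
      (w ᵥ* cplE K δ s) j = low + w (cplLast δ s j) * X ^ ((cplα δ s j - 1) * δ) := by
  refine ⟨∑ c ∈ Finset.univ.erase (cplLast δ s j), w c * cplE K δ s c j, ?_, ?_⟩
  · refine (degree_sum_le _ _).trans_lt ((Finset.sup_lt_iff (WithBot.bot_lt_coe _)).mpr ?_)
    intro c hc
    by_cases hlast : c ∈ Set.range (cplLast δ s)
    · obtain ⟨i, rfl⟩ := hlast
      have hij : i ≠ j := fun h => Finset.ne_of_mem_erase hc (congrArg _ h)
      have hE : cplE K δ s (cplLast δ s i) j = 0 := if_neg hij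
      rw [hE, mul_zero, degree_zero]
      exact WithBot.bot_lt_coe _
    · exact degree_mul_cplE_lt hlast (hw c hlast) j
  · have hE : cplE K δ s (cplLast δ s j) j = X ^ ((cplα δ s j - 1) * δ) := if_pos rfl
    rw [← hE, Finset.sum_erase_add _ _ (Finset.mem_univ _)]
    rfl

theorem entryDeg_cplLast_eq_natCast_iff (hδ : 0 < δ)
    (hw : ∀ c ∉ Set.range (cplLast δ s), (w c).degree < (δ : WithBot ℕ)) (j : Fin m) (n : ℕ) :
    entryDeg (fun c => -(cplShift δ s c : ℤ)) w (cplLast δ s j) = ((n : ℤ) : WithBot ℤ) ↔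
      entryDeg (fun j => -(s j : ℤ)) (w ᵥ* cplE K δ s) j = ((n : ℤ) : WithBot ℤ) := by
  obtain ⟨low, hlow, hsplit⟩ := exists_vecMul_cplE_eq_add hw j
  simp only [entryDeg, degZ_add_neg_eq_natCast_iff]
  rw [hsplit, cplShift_cplLast, ← cplβ_add_mul hδ s j, ← add_assoc,
    degree_add_mul_X_pow_eq_iff hlow]

theorem entryDeg_ne_natCast_of_notMem_range_cplLast {c : CplIdx δ s}
    (hc : c ∉ Set.range (cplLast δ s)) (hwc : (w c).degree < (δ : WithBot ℕ)) (n : ℕ) :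
    entryDeg (fun c => -(cplShift δ s c : ℤ)) w c ≠ ((n : ℤ) : WithBot ℤ) := by
  rw [entryDeg, ne_eq, degZ_add_neg_eq_natCast_iff, cplShift_of_notMem_range_cplLast hc]
  exact (hwc.trans_le (Nat.cast_le.mpr (Nat.le_add_left δ n))).ne

theorem entryDeg_cplShift_eq_natCast_iff (hδ : 0 < δ)
    (hw : ∀ c ∉ Set.range (cplLast δ s), (w c).degree < (δ : WithBot ℕ)) (n : ℕ)
    (c : CplIdx δ s) :
    entryDeg (fun c => -(cplShift δ s c : ℤ)) w c = ((n : ℤ) : WithBot ℤ) ↔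
      ∃ j, entryDeg (fun j => -(s j : ℤ)) (w ᵥ* cplE K δ s) j = ((n : ℤ) : WithBot ℤ) ∧
        cplLast δ s j = c := by
  constructor
  · intro h
    by_cases hc : c ∈ Set.range (cplLast δ s)
    · obtain ⟨j, rfl⟩ := hc
      exact ⟨j, (entryDeg_cplLast_eq_natCast_iff hδ hw j n).mp h, rfl⟩
    · exact absurd h (entryDeg_ne_natCast_of_notMem_range_cplLast hc (hw c hc) n)
  · rintro ⟨j, h, rfl⟩
    exact (entryDeg_cplLast_eq_natCast_iff hδ hw j n).mpr h

end PartialLinearization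

theorem cpl_rdeg_and_weakPopov_general {K ι : Type*} [Field K] [Preorder ι] {m : ℕ}
    (s : Fin m → ℕ) (δ : ℕ) (hδ : 0 < δ)
    (M : Matrix ι (Fin m) K[X])
    (hM : ∀ i, ((0 : ℤ) : WithBot ℤ) ≤ rdeg (fun j => -(s j : ℤ)) M i)
    (Mb : Matrix ι (CplIdx δ s) K[X])
    (hME : M = Mb * cplE K δ s)
    (hMdeg : ∀ (r : ι) (c : CplIdx δ s),
      ¬(((ofLex c).2 : ℕ) = cplα δ s (ofLex c).1 - 1) →
      (Mb r c).degree < (δ : WithBot ℕ)) :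
    (∀ i, rdeg (fun c => -(cplShift δ s c : ℤ)) Mb i = rdeg (fun j => -(s j : ℤ)) M i) ∧
    (IsWeakPopov (fun c => -(cplShift δ s c : ℤ)) Mb ↔
      IsWeakPopov (fun j => -(s j : ℤ)) M) := by
  subst hME
  have hentry (i : ι) := entryDeg_cplShift_eq_natCast_iff hδ fun c hc =>
    hMdeg i c (mem_range_cplLast_iff.not.mp hc)
  refine ⟨fun i => rdegRow_eq_of_entryDeg_iff (hM i) (hentry i), ?_⟩
  exact isWeakPopov_iff_of_piv_eq_map (cplLast_strictMono δ s) fun i =>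
    piv_eq_map_of_entryDeg_iff (cplLast_strictMono δ s).monotone (hM i) (hentry i)

/-- Lemma 5.4: the column partial linearization preserves
shifted row degrees (`rdeg_{−s̄}(K̄) = rdeg_{−s}(K)` when `rdeg_{−s}(K) ≥ 0`),
and maps `(−s)`-weak Popov forms to `(−s̄)`-weak Popov forms. -/
theorem cpl_rdeg_and_weakPopov {K : Type*} [Field K] {m k : ℕ}
    (s : Fin m → ℕ) (δ : ℕ) (hδ : 0 < δ)
    (M : Matrix (Fin k) (Fin m) K[X])
    (hM : ∀ i, ((0 : ℤ) : WithBot ℤ) ≤ rdeg (fun j => -(s j : ℤ)) M i)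
    (Mb : Matrix (Fin k) (CplIdx δ s) K[X])
    (hME : M = Mb * cplE K δ s)
    (hMdeg : ∀ (r : Fin k) (c : CplIdx δ s),
      ¬(((ofLex c).2 : ℕ) = cplα δ s (ofLex c).1 - 1) →
      (Mb r c).degree < (δ : WithBot ℕ)) :
    (∀ i, rdeg (fun c => -(cplShift δ s c : ℤ)) Mb i = rdeg (fun j => -(s j : ℤ)) M i) ∧
    (IsWeakPopov (fun j => -(s j : ℤ)) M →
      IsWeakPopov (fun c => -(cplShift δ s c : ℤ)) Mb) :=
  cpl_rdeg_and_weakPopov_general s δ hδ M hM Mb hME hMdeg |>.imp_right Iff.mpr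
end
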